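/- arXiv:2012.08766 — 2 statements merged into one kernel-verified Lean document; each statement's English description precedes it below -/
import Mathlib

section
/- Let 1<p<∞, η>0 and α < 1/p'. Then for every u ∈ C_c^1((0,η]) one has ∫_0^η |u'(t)|^p t^{αp} dt ≥ Λ_{α,p} ∫_0^η |u(t)|^p t^{(α-1)p} dt + Λ_{α,p}^{1/p'} η^{αp - (p-1)} |u(η)|^p. -/
open MeasureTheory Set

/-!
Let `c = (p - 1) / p - α`, `v = t ^ (α - 1) • c • u` and `w = t ^ α • u'`. The boundary term
`|c| ^ (p - 2) * c * t ^ (α * p - (p - 1)) * ‖u‖ ^ p` has derivative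
`p ‖v‖ ^ (p - 2) ⟪v, w⟫ - p ‖v‖ ^ p`, and since the convex function `‖·‖ ^ p` lies above its tangent
at `v`, this is at most `‖w‖ ^ p - ‖v‖ ^ p`, the difference of the two Hardy integrands.
Integrating gives the inequality. Near `0`, where `u` vanishes, the difference is nonnegative, so
the singular endpoint costs nothing.
-/

open Filter
open scoped Topology RealInnerProductSpace

section Integrability

variable {E : Type*} {f : ℝ → E} {a b : ℝ}

theorem exists_mem_Ioo_eqOn_zero_Ioc [Zero E] (hab : a < b) (hf : f =ᶠ[𝓝[>] a] 0) :
    ∃ c ∈ Ioo a b, EqOn f 0 (Ioc a c) := by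
  obtain ⟨c, hac, hc⟩ :=
    mem_nhdsGT_iff_exists_Ioc_subset.mp (inter_mem hf (Ioo_mem_nhdsGT hab))
  exact ⟨c, (hc (right_mem_Ioc.mpr hac)).2, fun t ht => (hc ht).1⟩

variable [NormedAddCommGroup E]

theorem intervalIntegrable_of_continuousOn_Ioc_of_eventuallyEq_zero (hab : a < b)
    (hf : ContinuousOn f (Ioc a b)) (hf0 : f =ᶠ[𝓝[>] a] 0) : IntervalIntegrable f volume a b := by
  obtain ⟨c, ⟨hac, hcb⟩, hc⟩ := exists_mem_Ioo_eqOn_zero_Ioc hab hf0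
  have h_left : IntervalIntegrable f volume a c :=
    intervalIntegrable_const (c := (0 : E)) |>.congr (by rw [uIoc_of_le hac.le]; exact hc.symm)
  have h_right : IntervalIntegrable f volume c b :=
    (hf.mono fun t ht => ⟨hac.trans_le ht.1, ht.2⟩).intervalIntegrable_of_Icc hcb.le
  exact h_left.trans h_right

theorem deriv_right_eventuallyEq_zero [NormedSpace ℝ E] {f' : ℝ → E} (hab : a < b)
    (hf : ∀ t ∈ Ioo a b, HasDerivWithinAt f (f' t) (Ioi t) t) (hf0 : f =ᶠ[𝓝[>] a] 0) :
    f' =ᶠ[𝓝[>] a] 0 := by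
  obtain ⟨c, ⟨hac, hcb⟩, hc⟩ := exists_mem_Ioo_eqOn_zero_Ioc hab hf0
  filter_upwards [Ioo_mem_nhdsGT hac] with t ht
  have hft : f =ᶠ[𝓝[>] t] 0 := by
    filter_upwards [Ioo_mem_nhdsGT ht.2] with s hs using hc ⟨ht.1.trans hs.1, hs.2.le⟩
  have h_zero : HasDerivWithinAt f 0 (Ioi t) t :=
    (hasDerivWithinAt_const t (Ioi t) (0 : E)).congr_of_eventuallyEq hft (hc ⟨ht.1, ht.2.le⟩)
  exact (uniqueDiffWithinAt_Ioi t).eq_deriv _ (hf t ⟨ht.1, ht.2.trans hcb⟩) h_zero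

theorem continuousOn_norm_rpow_mul_rpow {s : Set ℝ} {p : ℝ} (hp : 0 ≤ p) (β : ℝ)
    (hs : s ⊆ Ioi 0) (hf : ContinuousOn f s) : ContinuousOn (fun t => ‖f t‖ ^ p * t ^ β) s :=
  (hf.norm.rpow_const fun _ _ => Or.inr hp).mul
    (continuousOn_id.rpow_const fun _ ht => Or.inl (hs ht).ne')

theorem intervalIntegrable_norm_rpow_mul_rpow {p : ℝ} (hp : 0 < p) (β : ℝ) (hb : 0 < b)
    (hf : ContinuousOn f (Ioc 0 b)) (hf0 : f =ᶠ[𝓝[>] 0] 0) :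
    IntervalIntegrable (fun t => ‖f t‖ ^ p * t ^ β) volume 0 b := by
  refine intervalIntegrable_of_continuousOn_Ioc_of_eventuallyEq_zero hb
    (continuousOn_norm_rpow_mul_rpow hp.le β Ioc_subset_Ioi_self hf) ?_
  filter_upwards [hf0] with t ht
  simp only [ht, Pi.zero_apply, norm_zero, Real.zero_rpow hp.ne', zero_mul]

end Integrability

theorem mul_mul_rpow_sub_one_le_rpow_add {p a b : ℝ} (hp : 1 < p) (ha : 0 ≤ a) (hb : 0 ≤ b) :
    p * (a * b ^ (p - 1)) ≤ a ^ p + (p - 1) * b ^ p := by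
  have hpq := Real.HolderConjugate.conjExponent hp
  have h_young := Real.young_inequality_of_nonneg ha (Real.rpow_nonneg hb (p - 1)) hpq
  rw [← Real.rpow_mul hb, hpq.sub_one_mul_conj, Real.conjExponent] at h_young
  calc p * (a * b ^ (p - 1)) ≤ p * (a ^ p / p + b ^ p / (p / (p - 1))) := by gcongr
    _ = a ^ p + (p - 1) * b ^ p := by field_simp

section NormedSpace

variable {E : Type*} [NormedAddCommGroup E]

/-- The boundary term at `t` of the power-weight Hardy inequality. With `c = (p - 1) / p - α`, the
coefficient `|c| ^ (p - 2) * c` is the signed power of `c` of order `p - 1`, so the term changes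
sign at the critical value `α = (p - 1) / p`. -/
noncomputable def hardyBoundaryTerm (p α : ℝ) (u : ℝ → E) (t : ℝ) : ℝ :=
  |(p - 1) / p - α| ^ (p - 2) * ((p - 1) / p - α) * (‖u t‖ ^ p * t ^ (α * p - (p - 1)))

theorem hardyBoundaryTerm_eq_zero {p : ℝ} (hp : p ≠ 0) (α : ℝ) {u : ℝ → E} {t : ℝ}
    (hu : u t = 0) : hardyBoundaryTerm p α u t = 0 := by
  simp only [hardyBoundaryTerm, hu, norm_zero, Real.zero_rpow hp, zero_mul, mul_zero]

theorem hardyBoundaryTerm_of_lt {p α : ℝ} (hp : p ≠ 0) (hα : α < (p - 1) / p) (u : ℝ → E) (t : ℝ) :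
    hardyBoundaryTerm p α u t =
      (|(p - 1) / p - α| ^ p) ^ ((p - 1) / p) * t ^ (α * p - (p - 1)) * ‖u t‖ ^ p := by
  have hc : 0 < (p - 1) / p - α := sub_pos.mpr hα
  have h_coeff : (|(p - 1) / p - α| ^ p) ^ ((p - 1) / p) =
      |(p - 1) / p - α| ^ (p - 2) * ((p - 1) / p - α) := by
    rw [abs_of_pos hc, ← Real.rpow_mul hc.le, mul_div_cancel₀ _ hp, ← Real.rpow_add_one hc.ne']
    congr 1
    ring
  rw [hardyBoundaryTerm, h_coeff]
  ring

variable [NormedSpace ℝ E]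

theorem norm_rpow_smul_rpow {t : ℝ} (ht : 0 ≤ t) (β q : ℝ) (x : E) :
    ‖t ^ β • x‖ ^ q = ‖x‖ ^ q * t ^ (β * q) := by
  rw [norm_smul, Real.norm_of_nonneg (Real.rpow_nonneg ht β),
    Real.mul_rpow (Real.rpow_nonneg ht β) (norm_nonneg x), ← Real.rpow_mul ht, mul_comm]

theorem norm_rpow_smul_smul_rpow {t : ℝ} (ht : 0 ≤ t) (β c q : ℝ) (x : E) :
    ‖t ^ β • c • x‖ ^ q = |c| ^ q * (‖x‖ ^ q * t ^ (β * q)) := by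
  rw [norm_rpow_smul_rpow ht, norm_smul, Real.norm_eq_abs,
    Real.mul_rpow (abs_nonneg c) (norm_nonneg x), mul_assoc]

end NormedSpace

section InnerProductSpace

variable {E : Type*} [NormedAddCommGroup E] [InnerProductSpace ℝ E]

theorem norm_rpow_tangent_le {p : ℝ} (hp : 1 < p) (v w : E) :
    p * (‖v‖ ^ (p - 2) * ⟪v, w⟫) ≤ ‖w‖ ^ p + (p - 1) * ‖v‖ ^ p := by
  have h_rpow : ‖v‖ ^ (p - 1) = ‖v‖ ^ (p - 2) * ‖v‖ := by
    rw [← Real.rpow_add_one' (norm_nonneg v) (by linarith)]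
    congr 1
    ring
  calc p * (‖v‖ ^ (p - 2) * ⟪v, w⟫) ≤ p * (‖v‖ ^ (p - 2) * (‖v‖ * ‖w‖)) := by
        gcongr
        exact real_inner_le_norm v w
    _ = p * (‖w‖ * ‖v‖ ^ (p - 1)) := by rw [h_rpow]; ring
    _ ≤ ‖w‖ ^ p + (p - 1) * ‖v‖ ^ p :=
        mul_mul_rpow_sub_one_le_rpow_add hp (norm_nonneg w) (norm_nonneg v)

theorem hasDerivWithinAt_norm_rpow {p : ℝ} (hp : 1 < p) {u : ℝ → E} {y : E} {s : Set ℝ} {t : ℝ}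
    (hu : HasDerivWithinAt u y s t) :
    HasDerivWithinAt (fun t => ‖u t‖ ^ p) (p * (‖u t‖ ^ (p - 2) * ⟪u t, y⟫)) s t := by
  refine ((hasFDerivAt_norm_rpow (u t) hp).comp_hasDerivWithinAt t hu).congr_deriv ?_
  simp only [smul_apply, innerSL_apply_apply, smul_eq_mul, mul_assoc]

variable {p : ℝ} (α : ℝ) {u u' : ℝ → E} {t : ℝ}

theorem hasDerivWithinAt_hardyBoundaryTerm (hp : 1 < p) {v y : E} {s : Set ℝ} (ht : 0 < t)
    (hu : HasDerivWithinAt u y s t) (hv : v = t ^ (α - 1) • ((p - 1) / p - α) • u t) :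
    HasDerivWithinAt (hardyBoundaryTerm p α u)
      (p * (‖v‖ ^ (p - 2) * ⟪v, t ^ α • y⟫) - p * ‖v‖ ^ p) s t := by
  have h_exponent : α * p - (p - 1) = -(((p - 1) / p - α) * p) := by field_simp; ring
  have h_weight : t ^ (α * p - (p - 1)) = t ^ ((α - 1) * (p - 2)) * t ^ (α - 1) * t ^ α := by
    rw [← Real.rpow_add ht, ← Real.rpow_add ht]
    congr 1
    ring
  have h_weight_deriv := (Real.hasDerivAt_rpow_const (x := t) (p := α * p - (p - 1))
    (Or.inl ht.ne')).hasDerivWithinAt (s := s)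
  rw [show α * p - (p - 1) - 1 = (α - 1) * p by ring] at h_weight_deriv
  refine (((hasDerivWithinAt_norm_rpow hp hu).mul h_weight_deriv).const_mul
    (|(p - 1) / p - α| ^ (p - 2) * ((p - 1) / p - α))).congr_deriv ?_
  rw [hv, norm_rpow_smul_smul_rpow ht.le, norm_rpow_smul_smul_rpow ht.le]
  simp only [real_inner_smul_left, real_inner_smul_right]
  generalize (p - 1) / p - α = c at *
  have h_abs : |c| ^ p = |c| ^ (p - 2) * c * c := by
    rw [mul_assoc, ← abs_mul_abs_self c, ← mul_assoc, ← Real.rpow_add_one' (abs_nonneg c)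
      (by linarith), ← Real.rpow_add_one' (abs_nonneg c) (by linarith)]
    congr 1
    ring
  rw [h_weight, h_abs]
  linear_combination |c| ^ (p - 2) * c * t ^ ((α - 1) * p) * ‖u t‖ ^ p * h_exponent

theorem hardyBoundaryTerm_sub_le_integral (hp : 1 < p) {a b : ℝ} (ha : 0 < a) (hab : a ≤ b)
    (huc : ContinuousOn u (Icc a b))
    (hu : ∀ t ∈ Ioo a b, HasDerivWithinAt u (u' t) (Ioi t) t)
    (hu' : IntervalIntegrable (fun t => ‖u' t‖ ^ p * t ^ (α * p)) volume a b) :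
    hardyBoundaryTerm p α u b - hardyBoundaryTerm p α u a ≤
      ∫ t in a..b, (‖u' t‖ ^ p * t ^ (α * p) -
        |(p - 1) / p - α| ^ p * (‖u t‖ ^ p * t ^ ((α - 1) * p))) := by
  have hp0 : 0 ≤ p := by linarith
  have h_pos : Icc a b ⊆ Ioi 0 := fun t ht => ha.trans_le ht.1
  have h_boundary : ContinuousOn (hardyBoundaryTerm p α u) (Icc a b) :=
    (continuousOn_norm_rpow_mul_rpow hp0 (α * p - (p - 1)) h_pos huc).const_smul
      (|(p - 1) / p - α| ^ (p - 2) * ((p - 1) / p - α))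
  have h_potential := ((continuousOn_norm_rpow_mul_rpow hp0 ((α - 1) * p) h_pos huc).const_smul
    (|(p - 1) / p - α| ^ p)).integrableOn_Icc (μ := volume)
  have h_energy := (intervalIntegrable_iff_integrableOn_Icc_of_le hab).mp hu'
  refine intervalIntegral.sub_le_integral_of_hasDeriv_right_of_le hab h_boundary
    (fun t ht => hasDerivWithinAt_hardyBoundaryTerm α hp (ha.trans ht.1) (hu t ht) rfl)
    (h_energy.sub h_potential) fun t ht => ?_
  have ht0 : 0 ≤ t := (ha.trans ht.1).le
  rw [← norm_rpow_smul_smul_rpow ht0, ← norm_rpow_smul_rpow ht0]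
  linarith [norm_rpow_tangent_le hp (t ^ (α - 1) • ((p - 1) / p - α) • u t) (t ^ α • u' t)]

theorem hardy_power_subcritical_general (hp : 1 < p) {η : ℝ} (hη : 0 < η)
    (huc : ContinuousOn u (Ioc 0 η))
    (hu : ∀ t ∈ Ioo 0 η, HasDerivWithinAt u (u' t) (Ioi t) t)
    (hu' : IntervalIntegrable (fun t => ‖u' t‖ ^ p * t ^ (α * p)) volume 0 η)
    (hu0 : u =ᶠ[𝓝[>] 0] 0) :
    |(p - 1) / p - α| ^ p * (∫ t in (0 : ℝ)..η, ‖u t‖ ^ p * t ^ ((α - 1) * p))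
      + hardyBoundaryTerm p α u η ≤ ∫ t in (0 : ℝ)..η, ‖u' t‖ ^ p * t ^ (α * p) := by
  have hp0 : 0 < p := by linarith
  obtain ⟨b, ⟨hb, hbη⟩, hub⟩ := exists_mem_Ioo_eqOn_zero_Ioc hη hu0
  have h_potential := (intervalIntegrable_norm_rpow_mul_rpow hp0 ((α - 1) * p) hη huc hu0).const_mul
    (|(p - 1) / p - α| ^ p)
  have h_deficit := hu'.sub h_potential
  have hb_mem : b ∈ uIcc 0 η := by
    rw [uIcc_of_le hη.le]
    exact ⟨hb.le, hbη.le⟩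
  have h_truncated := hardyBoundaryTerm_sub_le_integral α hp hb hbη.le
    (huc.mono fun t ht => ⟨hb.trans_le ht.1, ht.2⟩)
    (fun t ht => hu t ⟨hb.trans ht.1, ht.2⟩)
    (hu'.mono_set (uIcc_subset_uIcc_right hb_mem))
  rw [hardyBoundaryTerm_eq_zero hp0.ne' α (hub (right_mem_Ioc.mpr hb)), sub_zero] at h_truncated
  have h_near_zero : 0 ≤ ∫ t in (0 : ℝ)..b, (‖u' t‖ ^ p * t ^ (α * p) -
      |(p - 1) / p - α| ^ p * (‖u t‖ ^ p * t ^ ((α - 1) * p))) := by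
    rw [intervalIntegral.integral_of_le hb.le]
    refine setIntegral_nonneg measurableSet_Ioc fun t ht => ?_
    have ht0 := ht.1
    simp only [hub ht, Pi.zero_apply, norm_zero, Real.zero_rpow hp0.ne', zero_mul, mul_zero,
      sub_zero]
    positivity
  have h_split := intervalIntegral.integral_add_adjacent_intervals
    (h_deficit.mono_set (uIcc_subset_uIcc_left hb_mem))
    (h_deficit.mono_set (uIcc_subset_uIcc_right hb_mem))
  rw [intervalIntegral.integral_sub hu' h_potential, intervalIntegral.integral_const_mul] at h_split
  linarith

theorem hardy_power_of_continuousOn_deriv (hp : 1 < p) {η : ℝ} (hη : 0 < η)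
    (hu : ∀ t ∈ Ioc 0 η, HasDerivWithinAt u (u' t) (Ioc 0 η) t)
    (hu'c : ContinuousOn u' (Ioc 0 η)) (hu0 : u =ᶠ[𝓝[>] 0] 0) :
    |(p - 1) / p - α| ^ p * (∫ t in (0 : ℝ)..η, ‖u t‖ ^ p * t ^ ((α - 1) * p))
      + hardyBoundaryTerm p α u η ≤ ∫ t in (0 : ℝ)..η, ‖u' t‖ ^ p * t ^ (α * p) := by
  have huc : ContinuousOn u (Ioc 0 η) := fun t ht => (hu t ht).continuousWithinAt
  have hu_right : ∀ t ∈ Ioo 0 η, HasDerivWithinAt u (u' t) (Ioi t) t := fun t ht =>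
    ((hu t ⟨ht.1, ht.2.le⟩).hasDerivAt (Ioc_mem_nhds ht.1 ht.2)).hasDerivWithinAt
  have hu' := intervalIntegrable_norm_rpow_mul_rpow (zero_lt_one.trans hp) (α * p) hη hu'c
    (deriv_right_eventuallyEq_zero hη hu_right hu0)
  exact hardy_power_subcritical_general α hp hη huc hu_right hu' hu0

end InnerProductSpace

/-- Power-weight Hardy inequality in the subcritical case
`α < 1/p' = (p-1)/p`, with positive one-sided boundary term. -/
theorem hardy_power_subcritical (p η α : ℝ) (hp : 1 < p) (hη : 0 < η)
    (hα : α < (p - 1) / p)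
    (u u' : ℝ → ℝ)
    (hu : ∀ t ∈ Set.Ioc (0:ℝ) η, HasDerivWithinAt u (u' t) (Set.Ioc (0:ℝ) η) t)
    (hu'c : ContinuousOn u' (Set.Ioc (0:ℝ) η))
    (hsupp : ∃ a, 0 < a ∧ ∀ t ≤ a, u t = 0) :
    (∫ t in (0:ℝ)..η, |u' t| ^ p * t ^ (α * p))
    ≥ |(p - 1) / p - α| ^ p * (∫ t in (0:ℝ)..η, |u t| ^ p * t ^ ((α - 1) * p))
      + (|(p - 1) / p - α| ^ p) ^ ((p - 1) / p) * η ^ (α * p - (p - 1)) * |u η| ^ p := by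
  obtain ⟨a, ha, hua⟩ := hsupp
  rw [← Real.norm_eq_abs (u η), ← hardyBoundaryTerm_of_lt (zero_lt_one.trans hp).ne' hα]
  exact hardy_power_of_continuousOn_deriv α hp hη hu hu'c
    (mem_of_superset (Ioc_mem_nhdsGT ha) fun t ht => hua t ht.2)
end

section
/- Let 1<p<∞, η>0 and w ∈ Q(ℝ₊). For ε>0 define u_ε(t) = f_η(t)^{1/p' + ε} on (0,η]. Then ∫_0^η |u_ε'(t)|^p W_p(t) dt = (1/p' + ε)^p f_η(η)^{εp} / (pε) and Λ_p ∫_0^η |u_ε(t)|^p W_p(t) / F_η(t)^p dt = (1/p')^p f_η(η)^{εp} / (pε); consequently ( ∫_0^η |u_ε'(t)|^p W_p(t) dt − Λ_p ∫_0^η |u_ε(t)|^p W_p(t) / F_η(t)^p dt ) · f_η(η)^{p-1} / u_ε(η)^p tends to Λ_p^{1/p'} as ε → 0⁺, so the boundary constant Λ_p^{1/p'} in the Hardy inequality ∫_0^η |u'|^p W_p dt ≥ Λ_p ∫_0^η |u|^p W_p / F_η^p dt + Λ_p^{1/p'} f_η(η)^{1-p} |u(η)|^p cannot be replaced by any larger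 constant. -/
open MeasureTheory Set

/-- `f_η(t) = ∫_0^t w(s)⁻¹ ds`  (case `w ∈ Q(ℝ₊)`). -/
noncomputable def fQ (w : ℝ → ℝ) (t : ℝ) : ℝ := ∫ s in (0:ℝ)..t, (w s)⁻¹

/-- `F_η(t) = w(t) f_η(t)`. -/
noncomputable def FQ (w : ℝ → ℝ) (t : ℝ) : ℝ := w t * fQ w t

/-- `W_p(t) = w(t)^(p-1)`. -/
noncomputable def Wp (w : ℝ → ℝ) (p t : ℝ) : ℝ := w t ^ (p - 1)

/-- The test function `u_ε(t) = f_η(t)^(1/p' + ε)`, with `1/p' = (p-1)/p`. -/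
noncomputable def uTest (w : ℝ → ℝ) (p ε t : ℝ) : ℝ := fQ w t ^ ((p - 1) / p + ε)

/-!
The substitution `x = f_η(t)` turns the two integrals into the unweighted ones, `∫₀ᴸ |v'|ᵖ dx` and
`∫₀ᴸ |v|ᵖ / xᵖ dx` with `L = f_η(η)`, and `u_ε` into the power `xᵃ` with `a = 1/p' + ε`. Everything
is then explicit: the deficit divided by the boundary term is `(aᵖ - Λ_p) / (pε)`, which is `1/p`
times a difference quotient of `x ↦ xᵖ` at `1/p'`. The power `xᵃ` does not vanish near `0`, so it is
not itself a test function, but it is the limit as `δ → 0` of the `C¹` functions `(x^(a/2) - δ)₊²`,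
whose derivatives are at most that of `xᵃ`.
-/

open Filter Topology

section TestFunctions

variable {L a δ x : ℝ} {v v' : ℝ → ℝ}

lemma hasDerivAt_max_zero_pow {n : ℕ} (hn : 1 < n) (x : ℝ) :
    HasDerivAt (fun y : ℝ => max y 0 ^ n) (n * max x 0 ^ (n - 1)) x := by
  rcases lt_trichotomy x 0 with hx | rfl | hx
  · have hzero : (fun y : ℝ => max y 0 ^ n) =ᶠ[𝓝 x] fun _ => 0 := by
      filter_upwards [Iio_mem_nhds hx] with y hy
      rw [max_eq_right (mem_Iio.1 hy).le, zero_pow (by lia)]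
    rw [max_eq_right hx.le, zero_pow (by lia), mul_zero]
    exact (hasDerivAt_const x 0).congr_of_eventuallyEq hzero
  · have hO : (fun y : ℝ => max y 0 ^ n) =O[𝓝 0] fun y => ‖y - 0‖ ^ n := by
      refine Asymptotics.IsBigO.pow (Asymptotics.IsBigO.of_bound' (.of_forall fun y => ?_)) n
      rw [sub_zero, norm_norm, Real.norm_of_nonneg (le_max_right _ _)]
      exact max_le (Real.le_norm_self y) (norm_nonneg y)
    rw [max_self, zero_pow (by lia), mul_zero]
    simpa using (hO.hasFDerivAt (𝕜 := ℝ) hn).hasDerivAt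
  · have hpow : (fun y : ℝ => max y 0 ^ n) =ᶠ[𝓝 x] fun y => y ^ n := by
      filter_upwards [Ioi_mem_nhds hx] with y hy
      rw [max_eq_left (mem_Ioi.1 hy).le]
    rw [max_eq_left hx.le]
    exact (hasDerivAt_pow n x).congr_of_eventuallyEq hpow

/-- The class of test functions of the Hardy inequality on `(0, L]`: `v` is `C¹` with derivative
`v'`, one-sided at `L`, and vanishes near `0`. Nothing is asked of `v` outside `(0, L]`. -/
structure IsHardyTestFun (L : ℝ) (v v' : ℝ → ℝ) : Prop where
  hasDerivWithinAt : ∀ x ∈ Ioc 0 L, HasDerivWithinAt v (v' x) (Ioc 0 L) x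
  continuousOn_deriv : ContinuousOn v' (Ioc 0 L)
  eventually_eq_zero : ∀ᶠ x in 𝓝[>] 0, v x = 0

lemma IsHardyTestFun.indicator_Ioi (hv : IsHardyTestFun L v v') :
    IsHardyTestFun L ((Ioi 0).indicator v) v' where
  hasDerivWithinAt x hx := (hv.hasDerivWithinAt x hx).congr
    (fun _ hy => indicator_of_mem hy.1 _) (indicator_of_mem hx.1 _)
  continuousOn_deriv := hv.continuousOn_deriv
  eventually_eq_zero := by
    filter_upwards [hv.eventually_eq_zero] with x hx
    simp [indicator_apply, hx]

lemma IsHardyTestFun.exists_forall_le_indicator_Ioi_eq_zero (hv : IsHardyTestFun L v v') :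
    ∃ b, 0 < b ∧ ∀ x ≤ b, (Ioi 0).indicator v x = 0 := by
  obtain ⟨b, hb, hvb⟩ := mem_nhdsGT_iff_exists_Ioc_subset.1 hv.eventually_eq_zero
  exact ⟨b, hb, fun x hx => indicator_apply_eq_zero.2 fun hx0 => hvb ⟨hx0, hx⟩⟩

/-- A truncation of the power `x ^ a` on `(0, ∞)` vanishing near `0`. The square makes it `C¹`, and
halving the exponent compensates for it, so that the bounds `truncPow_le` and
`abs_truncPowDeriv_le` have no constants. -/
noncomputable def truncPow (a δ x : ℝ) : ℝ := max (x ^ (a / 2) - δ) 0 ^ 2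

/-- The derivative of `truncPow a δ` on `(0, ∞)`. -/
noncomputable def truncPowDeriv (a δ x : ℝ) : ℝ := a * (max (x ^ (a / 2) - δ) 0 * x ^ (a / 2 - 1))

lemma truncPow_nonneg : 0 ≤ truncPow a δ x := sq_nonneg _

lemma rpow_half_sq (hx : 0 ≤ x) : (x ^ (a / 2)) ^ 2 = x ^ a := by
  rw [← Real.rpow_mul_natCast hx, Nat.cast_ofNat, div_mul_cancel₀ a two_ne_zero]

lemma max_rpow_half_sub_le (hδ : 0 ≤ δ) (hx : 0 ≤ x) : max (x ^ (a / 2) - δ) 0 ≤ x ^ (a / 2) :=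
  max_le (sub_le_self _ hδ) (Real.rpow_nonneg hx _)

lemma truncPow_le (hδ : 0 ≤ δ) (hx : 0 ≤ x) : truncPow a δ x ≤ x ^ a := by
  rw [← rpow_half_sq hx]
  exact pow_le_pow_left₀ (le_max_right _ _) (max_rpow_half_sub_le hδ hx) 2

lemma abs_truncPowDeriv_le (hδ : 0 ≤ δ) (hx : 0 < x) :
    |truncPowDeriv a δ x| ≤ |a * x ^ (a - 1)| := by
  have hsplit : x ^ (a - 1) = x ^ (a / 2) * x ^ (a / 2 - 1) := by
    rw [← Real.rpow_add hx]
    ring_nf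
  rw [truncPowDeriv, hsplit, abs_mul a, abs_mul a]
  refine mul_le_mul_of_nonneg_left (abs_le_abs_of_nonneg (by positivity) ?_) (abs_nonneg a)
  gcongr
  exact max_rpow_half_sub_le hδ hx.le

lemma tendsto_truncPow (hx : 0 ≤ x) :
    Tendsto (fun δ => truncPow a δ x) (𝓝[>] 0) (𝓝 (x ^ a)) := by
  have hcont : Continuous fun δ => truncPow a δ x := by
    unfold truncPow
    fun_prop
  have hzero : truncPow a 0 x = x ^ a := by
    rw [truncPow, sub_zero, max_eq_left (Real.rpow_nonneg hx _), rpow_half_sq hx]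
  exact hzero ▸ hcont.continuousWithinAt

lemma hasDerivAt_truncPow (hx : 0 < x) : HasDerivAt (truncPow a δ) (truncPowDeriv a δ x) x := by
  have hinner : HasDerivAt (fun x : ℝ => x ^ (a / 2) - δ) (a / 2 * x ^ (a / 2 - 1)) x :=
    (Real.hasDerivAt_rpow_const (Or.inl hx.ne')).sub_const δ
  refine ((hasDerivAt_max_zero_pow one_lt_two _).comp x hinner).congr_deriv ?_
  simp only [truncPowDeriv, Nat.cast_ofNat]
  ring

lemma eventually_truncPow_eq_zero (ha : 0 < a) (hδ : 0 < δ) :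
    ∀ᶠ x in 𝓝[>] 0, truncPow a δ x = 0 := by
  have hlim : Tendsto (fun x : ℝ => x ^ (a / 2)) (𝓝[>] 0) (𝓝 0) := by
    have h := (Real.continuousAt_rpow_const 0 (a / 2) (Or.inr (by positivity))).tendsto
    rw [Real.zero_rpow (by positivity)] at h
    exact h.mono_left nhdsWithin_le_nhds
  filter_upwards [hlim (Iio_mem_nhds hδ)] with x hx
  rw [truncPow, max_eq_right (sub_nonpos.2 (mem_Iio.1 hx).le), zero_pow two_ne_zero]

lemma continuousOn_truncPow : ContinuousOn (truncPow a δ) (Ioi 0) :=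
  fun _ hx => (hasDerivAt_truncPow hx).continuousAt.continuousWithinAt

lemma isHardyTestFun_truncPow (ha : 0 < a) (hδ : 0 < δ) :
    IsHardyTestFun L (truncPow a δ) (truncPowDeriv a δ) where
  hasDerivWithinAt _ hx := (hasDerivAt_truncPow hx.1).hasDerivWithinAt
  continuousOn_deriv := by
    have hpow (b : ℝ) : ContinuousOn (fun x : ℝ => x ^ b) (Ioc 0 L) :=
      continuousOn_id.rpow_const fun x hx => Or.inl hx.1.ne'
    exact continuousOn_const.mul
      ((((hpow _).sub continuousOn_const).sup continuousOn_const).mul (hpow _))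
  eventually_eq_zero := eventually_truncPow_eq_zero ha hδ

end TestFunctions

section PowerFunctions

variable {p L a b x δ : ℝ}

lemma abs_rpow_rpow (hx : 0 ≤ x) : |x ^ b| ^ p = x ^ (b * p) := by
  rw [abs_of_nonneg (Real.rpow_nonneg hx b), Real.rpow_mul hx]

lemma integral_abs_rpow_rpow (hL : 0 ≤ L) (hb : -1 < b * p) :
    ∫ x in (0 : ℝ)..L, |x ^ b| ^ p = L ^ (b * p + 1) / (b * p + 1) := by
  rw [intervalIntegral.integral_congr_Ioo_of_le hL fun x hx => abs_rpow_rpow hx.1.le,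
    integral_rpow (Or.inl hb), Real.zero_rpow (by linarith), sub_zero]

lemma intervalIntegrable_abs_rpow_rpow (hL : 0 ≤ L) (hb : -1 < b * p) :
    IntervalIntegrable (fun x : ℝ => |x ^ b| ^ p) volume 0 L := by
  refine (intervalIntegral.intervalIntegrable_rpow' hb).congr fun x hx => ?_
  rw [uIoc_of_le hL] at hx
  exact (abs_rpow_rpow hx.1.le).symm

lemma abs_rpow_rpow_div_rpow (hx : 0 < x) : |x ^ a| ^ p / x ^ p = |x ^ (a - 1)| ^ p := by
  rw [← Real.div_rpow (abs_nonneg _) hx.le, Real.rpow_sub_one hx.ne', abs_div, abs_of_pos hx]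

lemma integral_abs_rpow_rpow_div_rpow (hL : 0 ≤ L) (ha : -1 < (a - 1) * p) :
    ∫ x in (0 : ℝ)..L, |x ^ a| ^ p / x ^ p
      = L ^ ((a - 1) * p + 1) / ((a - 1) * p + 1) := by
  rw [← integral_abs_rpow_rpow hL ha]
  exact intervalIntegral.integral_congr_Ioo_of_le hL fun x hx => abs_rpow_rpow_div_rpow hx.1

lemma integral_abs_const_mul_rpow_rpow (c : ℝ) (hL : 0 ≤ L) (hb : -1 < b * p) :
    ∫ x in (0 : ℝ)..L, |c * x ^ b| ^ p = |c| ^ p * (L ^ (b * p + 1) / (b * p + 1)) := by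
  rw [← integral_abs_rpow_rpow hL hb, ← intervalIntegral.integral_const_mul]
  simp only [abs_mul, Real.mul_rpow (abs_nonneg c) (abs_nonneg _)]

lemma tendsto_integral_truncPow (hp : 0 ≤ p) (hL : 0 ≤ L) (ha : -1 < (a - 1) * p) :
    Tendsto (fun δ => ∫ x in (0 : ℝ)..L, |truncPow a δ x| ^ p / x ^ p) (𝓝[>] 0)
      (𝓝 (∫ x in (0 : ℝ)..L, |x ^ a| ^ p / x ^ p)) := by
  refine intervalIntegral.tendsto_integral_filter_of_dominated_convergence
    (fun x => |x ^ (a - 1)| ^ p) (.of_forall fun δ => ?_) ?_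
    (intervalIntegrable_abs_rpow_rpow hL ha) (.of_forall fun x hx => ?_)
  · rw [uIoc_of_le hL]
    refine ContinuousOn.aestronglyMeasurable ?_ measurableSet_Ioc
    exact (((continuousOn_truncPow.mono Ioc_subset_Ioi_self).abs.rpow_const
      fun _ _ => Or.inr hp).div (continuousOn_id.rpow_const fun x hx => Or.inl hx.1.ne')
      fun x hx => (Real.rpow_pos_of_pos hx.1 p).ne')
  · filter_upwards [self_mem_nhdsWithin] with δ hδ
    refine .of_forall fun x hx => ?_
    rw [uIoc_of_le hL] at hx
    have hx0 : 0 < x := hx.1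
    rw [Real.norm_of_nonneg (by positivity), ← abs_rpow_rpow_div_rpow hx0]
    gcongr
    · exact truncPow_nonneg
    · exact truncPow_le (mem_Ioi.1 hδ).le hx0.le
  · rw [uIoc_of_le hL] at hx
    exact ((tendsto_truncPow hx.1.le).abs.rpow_const (Or.inr hp)).div_const _

lemma integral_abs_truncPowDeriv_rpow_le (hp : 0 ≤ p) (hL : 0 ≤ L)
    (ha : -1 < (a - 1) * p) (hδ : 0 ≤ δ) :
    ∫ x in (0 : ℝ)..L, |truncPowDeriv a δ x| ^ p ≤ ∫ x in (0 : ℝ)..L, |a * x ^ (a - 1)| ^ p := by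
  have hint : IntervalIntegrable (fun x => |a * x ^ (a - 1)| ^ p) volume 0 L := by
    simpa only [abs_mul, Real.mul_rpow (abs_nonneg a) (abs_nonneg _)]
      using (intervalIntegrable_abs_rpow_rpow hL ha).const_mul (|a| ^ p)
  rw [intervalIntegral.integral_of_le hL, intervalIntegral.integral_of_le hL]
  refine integral_mono_of_nonneg (.of_forall fun x => by positivity) hint.1
    (ae_restrict_of_forall_mem measurableSet_Ioc fun x hx => ?_)
  exact Real.rpow_le_rpow (abs_nonneg _) (abs_truncPowDeriv_le hδ hx.1) hp

/-- As `δ → 0`, only the left-hand side for `truncPow a δ` needs a limit: the energy is at most that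
of `x ^ a` for every `δ`. -/
lemma hardy_rpow_of_forall_isHardyTestFun {K C : ℝ} (hp : 0 ≤ p) (hL : 0 ≤ L) (ha0 : 0 < a)
    (ha : -1 < (a - 1) * p)
    (hardy : ∀ v v', IsHardyTestFun L v v' →
      K * (∫ x in (0 : ℝ)..L, |v x| ^ p / x ^ p) + C * |v L| ^ p ≤ ∫ x in (0 : ℝ)..L, |v' x| ^ p) :
    K * (∫ x in (0 : ℝ)..L, |x ^ a| ^ p / x ^ p) + C * |L ^ a| ^ p
      ≤ ∫ x in (0 : ℝ)..L, |a * x ^ (a - 1)| ^ p := by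
  refine le_of_tendsto (((tendsto_integral_truncPow hp hL ha).const_mul K).add
    (((tendsto_truncPow hL).abs.rpow_const (Or.inr hp)).const_mul C)) ?_
  filter_upwards [self_mem_nhdsWithin] with δ hδ
  exact (hardy _ _ (isHardyTestFun_truncPow ha0 hδ)).trans
    (integral_abs_truncPowDeriv_rpow_le hp hL ha (mem_Ioi.1 hδ).le)

end PowerFunctions

section Weights

variable {w v v' g : ℝ → ℝ} {p η t : ℝ}

/-- The class `Q` of weights localized to `(0, η]`, with continuous instead of `C¹` weights and no
condition on their limit at `0`. -/
structure IsQWeightOn (w : ℝ → ℝ) (η : ℝ) : Prop where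
  pos : ∀ t ∈ Ioc 0 η, 0 < w t
  continuousOn : ContinuousOn w (Ioc 0 η)
  integrableOn_inv : IntegrableOn (fun s => (w s)⁻¹) (Ioo 0 η)

namespace IsQWeightOn

lemma intervalIntegrable_inv (hw : IsQWeightOn w η) (ht : t ∈ Icc 0 η) :
    IntervalIntegrable (fun s => (w s)⁻¹) volume 0 t :=
  (intervalIntegrable_iff_integrableOn_Ioo_of_le ht.1).2
    (hw.integrableOn_inv.mono_set (Ioo_subset_Ioo_right ht.2))

lemma continuousOn_inv (hw : IsQWeightOn w η) : ContinuousOn (fun s => (w s)⁻¹) (Ioc 0 η) :=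
  hw.continuousOn.inv₀ fun s hs => (hw.pos s hs).ne'

lemma fQ_pos (hw : IsQWeightOn w η) (ht : t ∈ Ioc 0 η) : 0 < fQ w t :=
  intervalIntegral.intervalIntegral_pos_of_pos_on
    (hw.intervalIntegrable_inv (Ioc_subset_Icc_self ht))
    (fun s hs => inv_pos.2 (hw.pos s ⟨hs.1, hs.2.le.trans ht.2⟩)) ht.1

lemma continuousOn_fQ (hw : IsQWeightOn w η) (hη : 0 ≤ η) : ContinuousOn (fQ w) (Icc 0 η) := by
  have h := intervalIntegral.continuousOn_primitive_interval'
    (hw.intervalIntegrable_inv (right_mem_Icc.2 hη)) left_mem_uIcc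
  rwa [uIcc_of_le hη] at h

lemma hasDerivWithinAt_fQ (hw : IsQWeightOn w η) (ht : t ∈ Ioc 0 η) :
    HasDerivWithinAt (fQ w) (w t)⁻¹ (Ioc 0 η) t := by
  obtain ⟨s, hs0, hst⟩ := exists_between ht.1
  have hsub : Icc s η ⊆ Ioc 0 η := fun r hr => ⟨hs0.trans_le hr.1, hr.2⟩
  have hmem : t ∈ Icc s η := ⟨hst.le, ht.2⟩
  have hcont : ContinuousOn (fun r => (w r)⁻¹) (Icc s η) := hw.continuousOn_inv.mono hsub
  have : Fact (t ∈ Icc s η) := ⟨hmem⟩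
  have hderiv : HasDerivWithinAt (fQ w) (w t)⁻¹ (Icc s η) t :=
    intervalIntegral.integral_hasDerivWithinAt_right
      (hw.intervalIntegrable_inv (Ioc_subset_Icc_self ht))
      (hcont.stronglyMeasurableAtFilter_nhdsWithin measurableSet_Icc t) (hcont t hmem)
  refine hderiv.mono_of_mem_nhdsWithin ?_
  filter_upwards [self_mem_nhdsWithin, mem_nhdsWithin_of_mem_nhds (Ioi_mem_nhds hst)]
    with r hr hsr
  exact ⟨hsr.le, hr.2⟩

lemma hasDerivAt_fQ (hw : IsQWeightOn w η) (ht : t ∈ Ioo 0 η) : HasDerivAt (fQ w) (w t)⁻¹ t :=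
  (hw.hasDerivWithinAt_fQ (Ioo_subset_Ioc_self ht)).hasDerivAt (Ioc_mem_nhds ht.1 ht.2)

lemma monotoneOn_fQ (hw : IsQWeightOn w η) (hη : 0 ≤ η) : MonotoneOn (fQ w) (Icc 0 η) := by
  refine monotoneOn_of_hasDerivWithinAt_nonneg (convex_Icc 0 η) (hw.continuousOn_fQ hη)
    (f' := fun t => (w t)⁻¹) (fun t ht => ?_) fun t ht => ?_
  all_goals rw [interior_Icc] at ht
  · exact (hw.hasDerivAt_fQ ht).hasDerivWithinAt
  · exact (inv_pos.2 (hw.pos t (Ioo_subset_Ioc_self ht))).le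

lemma mapsTo_fQ (hw : IsQWeightOn w η) (hη : 0 ≤ η) :
    MapsTo (fQ w) (Ioc 0 η) (Ioc 0 (fQ w η)) := fun _ ht =>
  ⟨hw.fQ_pos ht, hw.monotoneOn_fQ hη (Ioc_subset_Icc_self ht) (right_mem_Icc.2 hη) ht.2⟩

lemma tendsto_fQ_nhdsGT_zero (hw : IsQWeightOn w η) (hη : 0 < η) :
    Tendsto (fQ w) (𝓝[>] 0) (𝓝[>] 0) := by
  have hzero : fQ w 0 = 0 := intervalIntegral.integral_same
  have hlim : Tendsto (fQ w) (𝓝[Icc 0 η] 0) (𝓝 (fQ w 0)) :=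
    hw.continuousOn_fQ hη.le 0 (left_mem_Icc.2 hη.le)
  rw [hzero] at hlim
  refine tendsto_nhdsWithin_iff.2 ?_
  rw [← nhdsWithin_Ioc_eq_nhdsGT hη]
  refine ⟨hlim.mono_left (nhdsWithin_mono _ Ioc_subset_Icc_self), ?_⟩
  filter_upwards [self_mem_nhdsWithin] with t ht using hw.fQ_pos ht

lemma integral_comp_fQ_mul_inv (hw : IsQWeightOn w η) (hη : 0 ≤ η) :
    ∫ t in (0 : ℝ)..η, g (fQ w t) * (w t)⁻¹ = ∫ x in (0 : ℝ)..fQ w η, g x := by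
  have hzero : fQ w 0 = 0 := intervalIntegral.integral_same
  have hsubst := intervalIntegral.integral_comp_mul_deriv_of_deriv_nonneg (a := 0) (b := η)
    (f := fQ w) (f' := fun t => (w t)⁻¹) (g := g)
  rw [uIcc_of_le hη, min_eq_left hη, max_eq_right hη, hzero] at hsubst
  exact hsubst (hw.continuousOn_fQ hη) (fun t ht => hw.hasDerivAt_fQ ht)
    fun t ht => (inv_pos.2 (hw.pos t (Ioo_subset_Ioc_self ht))).le

lemma integral_energy_comp_fQ (hw : IsQWeightOn w η) (hη : 0 ≤ η) :
    ∫ t in (0 : ℝ)..η, |g (fQ w t) * (w t)⁻¹| ^ p * Wp w p t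
      = ∫ x in (0 : ℝ)..fQ w η, |g x| ^ p := by
  rw [← hw.integral_comp_fQ_mul_inv hη]
  refine intervalIntegral.integral_congr_Ioo_of_le hη fun t ht => ?_
  have hwt : 0 < w t := hw.pos t (Ioo_subset_Ioc_self ht)
  have hwp : w t ^ p ≠ 0 := (Real.rpow_pos_of_pos hwt p).ne'
  simp only [Wp]
  rw [abs_mul, abs_of_pos (inv_pos.2 hwt), Real.mul_rpow (abs_nonneg _) (by positivity),
    Real.inv_rpow hwt.le, Real.rpow_sub_one hwt.ne']
  field_simp

lemma integral_potential_comp_fQ (hw : IsQWeightOn w η) (hη : 0 ≤ η) :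
    ∫ t in (0 : ℝ)..η, |v (fQ w t)| ^ p * Wp w p t / FQ w t ^ p
      = ∫ x in (0 : ℝ)..fQ w η, |v x| ^ p / x ^ p := by
  rw [← hw.integral_comp_fQ_mul_inv hη]
  refine intervalIntegral.integral_congr_Ioo_of_le hη fun t ht => ?_
  have hwt : 0 < w t := hw.pos t (Ioo_subset_Ioc_self ht)
  have hwp : w t ^ p ≠ 0 := (Real.rpow_pos_of_pos hwt p).ne'
  simp only [Wp, FQ]
  rw [Real.mul_rpow hwt.le (hw.fQ_pos (Ioo_subset_Ioc_self ht)).le, Real.rpow_sub_one hwt.ne']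
  field_simp

end IsQWeightOn

lemma IsHardyTestFun.comp_fQ (hw : IsQWeightOn w η) (hη : 0 < η)
    (hv : IsHardyTestFun (fQ w η) v v') :
    IsHardyTestFun η (fun t => v (fQ w t)) (fun t => v' (fQ w t) * (w t)⁻¹) where
  hasDerivWithinAt t ht := (hv.hasDerivWithinAt _ (hw.mapsTo_fQ hη.le ht)).comp t
    (hw.hasDerivWithinAt_fQ ht) (hw.mapsTo_fQ hη.le)
  continuousOn_deriv := (hv.continuousOn_deriv.comp
    ((hw.continuousOn_fQ hη.le).mono Ioc_subset_Icc_self) (hw.mapsTo_fQ hη.le)).mul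
    hw.continuousOn_inv
  eventually_eq_zero := (hw.tendsto_fQ_nhdsGT_zero hη).eventually hv.eventually_eq_zero

end Weights

section BoundaryConstant

variable {w : ℝ → ℝ} {p η ε c t : ℝ}

lemma sub_one_div_add_sub_one_mul (hp : p ≠ 0) : ((p - 1) / p + ε - 1) * p = ε * p - 1 := by
  field_simp
  ring

lemma integral_energy_uTest_eq_integral_rpow (hw : IsQWeightOn w η) (hη : 0 ≤ η) :
    ∫ t in (0 : ℝ)..η, |deriv (uTest w p ε) t| ^ p * Wp w p t
      = ∫ x in (0 : ℝ)..fQ w η,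
          |((p - 1) / p + ε) * x ^ ((p - 1) / p + ε - 1)| ^ p := by
  rw [← hw.integral_energy_comp_fQ hη]
  refine intervalIntegral.integral_congr_Ioo_of_le hη fun t ht => ?_
  have hderiv : HasDerivAt (uTest w p ε) _ t := (hw.hasDerivAt_fQ ht).rpow_const
    (Or.inl (hw.fQ_pos (Ioo_subset_Ioc_self ht)).ne')
  simp only [hderiv.deriv]
  ring_nf

lemma integral_potential_uTest_eq_integral_rpow (hw : IsQWeightOn w η) (hη : 0 ≤ η) :
    ∫ t in (0 : ℝ)..η, |uTest w p ε t| ^ p * Wp w p t / FQ w t ^ p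
      = ∫ x in (0 : ℝ)..fQ w η, |x ^ ((p - 1) / p + ε)| ^ p / x ^ p :=
  hw.integral_potential_comp_fQ (v := fun x => x ^ ((p - 1) / p + ε)) hη

lemma integral_energy_uTest (hw : IsQWeightOn w η) (hη : 0 < η) (hp : 1 ≤ p) (hε : 0 < ε) :
    ∫ t in (0 : ℝ)..η, |deriv (uTest w p ε) t| ^ p * Wp w p t
      = ((p - 1) / p + ε) ^ p * fQ w η ^ (ε * p) / (p * ε) := by
  have hp0 : 0 < p := by linarith
  have hexp := sub_one_div_add_sub_one_mul (ε := ε) hp0.ne'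
  have ha : 0 ≤ (p - 1) / p + ε := add_nonneg (div_nonneg (sub_nonneg.2 hp) hp0.le) hε.le
  rw [integral_energy_uTest_eq_integral_rpow hw hη.le, integral_abs_const_mul_rpow_rpow _
    (hw.fQ_pos (right_mem_Ioc.2 hη)).le (by rw [hexp]; linarith [mul_pos hε hp0]), hexp,
    sub_add_cancel, abs_of_nonneg ha, mul_div_assoc, mul_comm p ε]

lemma integral_potential_uTest (hw : IsQWeightOn w η) (hη : 0 < η) (hp : 0 < p) (hε : 0 < ε) :
    ∫ t in (0 : ℝ)..η, |uTest w p ε t| ^ p * Wp w p t / FQ w t ^ p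
      = fQ w η ^ (ε * p) / (p * ε) := by
  have hexp := sub_one_div_add_sub_one_mul (ε := ε) hp.ne'
  rw [integral_potential_uTest_eq_integral_rpow hw hη.le, integral_abs_rpow_rpow_div_rpow
    (hw.fQ_pos (right_mem_Ioc.2 hη)).le (by rw [hexp]; linarith [mul_pos hε hp]), hexp,
    sub_add_cancel, mul_comm p ε]

/-- The deficit of the Hardy inequality without boundary term at `uTest w p ε`, divided by the
boundary term `f_η(η)^(1-p) |u_ε(η)|^p`. -/
noncomputable def normalizedDeficit (w : ℝ → ℝ) (p η ε : ℝ) : ℝ :=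
  ((∫ t in (0 : ℝ)..η, |deriv (uTest w p ε) t| ^ p * Wp w p t)
    - (1 - 1 / p) ^ p * ∫ t in (0 : ℝ)..η, |uTest w p ε t| ^ p * Wp w p t / FQ w t ^ p)
    * fQ w η ^ (p - 1) / uTest w p ε η ^ p

lemma uTest_rpow (hw : IsQWeightOn w η) (ht : t ∈ Ioc 0 η) (hp : p ≠ 0) :
    uTest w p ε t ^ p = fQ w t ^ (ε * p) * fQ w t ^ (p - 1) := by
  have hf : 0 < fQ w t := hw.fQ_pos ht
  rw [uTest, ← Real.rpow_mul hf.le, ← Real.rpow_add hf]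
  congr 1
  linear_combination sub_one_div_add_sub_one_mul (ε := ε) hp

lemma normalizedDeficit_eq (hw : IsQWeightOn w η) (hη : 0 < η) (hp : 1 ≤ p) (hε : 0 < ε) :
    normalizedDeficit w p η ε = ε⁻¹ * ((1 - 1 / p + ε) ^ p - (1 - 1 / p) ^ p) / p := by
  have hp0 : 0 < p := by linarith
  have hf : 0 < fQ w η := hw.fQ_pos (right_mem_Ioc.2 hη)
  have hbase : (p - 1) / p = 1 - 1 / p := by rw [sub_div, div_self hp0.ne']
  rw [normalizedDeficit, integral_energy_uTest hw hη hp hε, integral_potential_uTest hw hη hp0 hε,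
    uTest_rpow hw (right_mem_Ioc.2 hη) hp0.ne', hbase]
  field_simp

lemma tendsto_normalizedDeficit (hw : IsQWeightOn w η) (hη : 0 < η) (hp : 1 < p) :
    Tendsto (normalizedDeficit w p η) (𝓝[>] 0) (𝓝 (((1 - 1 / p) ^ p) ^ ((p - 1) / p))) := by
  have hp0 : p ≠ 0 := by positivity
  have hbase : 0 < 1 - 1 / p := sub_pos.2 ((div_lt_one (by linarith)).2 hp)
  have hslope := ((Real.hasDerivAt_rpow_const (p := p)
    (Or.inl hbase.ne')).tendsto_slope_zero_right).div_const p
  rw [mul_div_cancel_left₀ _ hp0] at hslope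
  rw [← Real.rpow_mul hbase.le, mul_div_cancel₀ _ hp0]
  refine hslope.congr' ?_
  filter_upwards [self_mem_nhdsWithin] with ε hε
  rw [normalizedDeficit_eq hw hη hp.le hε, smul_eq_mul]

/-- `c` is an admissible boundary constant: the Hardy inequality with boundary term
`c f_η(η)^(1-p) |u(η)|^p` holds for all test functions. -/
def IsHardyBoundaryConst (w : ℝ → ℝ) (p η c : ℝ) : Prop :=
  ∀ u u', IsHardyTestFun η u u' →
    (1 - 1 / p) ^ p * (∫ t in (0 : ℝ)..η, |u t| ^ p * Wp w p t / FQ w t ^ p)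
      + c * fQ w η ^ (1 - p) * |u η| ^ p ≤ ∫ t in (0 : ℝ)..η, |u' t| ^ p * Wp w p t

/-- `IsHardyTestFun` leaves the values on `(-∞, 0]` free, hence an extension by zero. -/
lemma isHardyBoundaryConst_of_forall_eq_zero_of_le (hη : 0 < η)
    (hc : ∀ u u' : ℝ → ℝ,
      (∀ t ∈ Ioc 0 η, HasDerivWithinAt u (u' t) (Ioc 0 η) t) → ContinuousOn u' (Ioc 0 η) →
      (∃ a, 0 < a ∧ ∀ t ≤ a, u t = 0) →
      (∫ t in (0 : ℝ)..η, |u' t| ^ p * Wp w p t)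
        ≥ (1 - 1 / p) ^ p * (∫ t in (0 : ℝ)..η, |u t| ^ p * Wp w p t / FQ w t ^ p)
          + c * fQ w η ^ (1 - p) * |u η| ^ p) :
    IsHardyBoundaryConst w p η c := by
  intro u u' hu
  have hu₀ := hu.indicator_Ioi
  have hardy := hc _ _ hu₀.hasDerivWithinAt hu₀.continuousOn_deriv
    hu.exists_forall_le_indicator_Ioi_eq_zero
  have hpotential : ∫ t in (0 : ℝ)..η, |(Ioi 0).indicator u t| ^ p * Wp w p t / FQ w t ^ p
      = ∫ t in (0 : ℝ)..η, |u t| ^ p * Wp w p t / FQ w t ^ p :=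
    intervalIntegral.integral_congr_Ioo_of_le hη.le fun t ht => by
      simp only [indicator_of_mem (mem_Ioi.2 ht.1)]
  rwa [hpotential, indicator_of_mem (mem_Ioi.2 hη)] at hardy

lemma IsHardyBoundaryConst.uTest_le (hc : IsHardyBoundaryConst w p η c) (hw : IsQWeightOn w η)
    (hη : 0 < η) (hp : 1 ≤ p) (hε : 0 < ε) :
    (1 - 1 / p) ^ p * (∫ t in (0 : ℝ)..η, |uTest w p ε t| ^ p * Wp w p t / FQ w t ^ p)
      + c * fQ w η ^ (1 - p) * |uTest w p ε η| ^ p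
      ≤ ∫ t in (0 : ℝ)..η, |deriv (uTest w p ε) t| ^ p * Wp w p t := by
  have hp0 : 0 < p := by linarith
  have ha : 0 < (p - 1) / p + ε := add_pos_of_nonneg_of_pos
    (div_nonneg (sub_nonneg.2 hp) hp0.le) hε
  rw [integral_energy_uTest_eq_integral_rpow hw hη.le,
    integral_potential_uTest_eq_integral_rpow hw hη.le]
  refine hardy_rpow_of_forall_isHardyTestFun hp0.le (hw.fQ_pos (right_mem_Ioc.2 hη)).le ha
    (by rw [sub_one_div_add_sub_one_mul hp0.ne']; linarith [mul_pos hε hp0]) fun v v' hv => ?_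
  rw [← hw.integral_energy_comp_fQ hη.le, ← hw.integral_potential_comp_fQ hη.le]
  exact hc _ _ (hv.comp_fQ hw hη)

lemma IsHardyBoundaryConst.le_normalizedDeficit (hc : IsHardyBoundaryConst w p η c)
    (hw : IsQWeightOn w η) (hη : 0 < η) (hp : 1 ≤ p) (hε : 0 < ε) :
    c ≤ normalizedDeficit w p η ε := by
  have hf : 0 < fQ w η := hw.fQ_pos (right_mem_Ioc.2 hη)
  have hu : 0 < uTest w p ε η := Real.rpow_pos_of_pos hf _
  have hcancel : fQ w η ^ (1 - p) * fQ w η ^ (p - 1) = 1 := by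
    rw [← Real.rpow_add hf, sub_add_sub_cancel, sub_self, Real.rpow_zero]
  have hardy := le_sub_iff_add_le'.2 (hc.uTest_le hw hη hp hε)
  rw [abs_of_pos hu] at hardy
  rw [normalizedDeficit, le_div_iff₀ (Real.rpow_pos_of_pos hu p)]
  calc c * uTest w p ε η ^ p
      = c * fQ w η ^ (1 - p) * uTest w p ε η ^ p * fQ w η ^ (p - 1) := by
        linear_combination -(c * uTest w p ε η ^ p) * hcancel
    _ ≤ _ := by gcongr

end BoundaryConstant

theorem hardy_Q_boundary_constant_sharp_general {p η : ℝ} (hp : 1 < p) (hη : 0 < η) {w : ℝ → ℝ}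
    (hw : IsQWeightOn w η) :
    (∀ ε : ℝ, 0 < ε →
      (∫ t in (0 : ℝ)..η, |deriv (uTest w p ε) t| ^ p * Wp w p t)
        = ((p - 1) / p + ε) ^ p * fQ w η ^ (ε * p) / (p * ε)
      ∧ (1 - 1 / p) ^ p *
          (∫ t in (0 : ℝ)..η, |uTest w p ε t| ^ p * Wp w p t / FQ w t ^ p)
        = ((p - 1) / p) ^ p * fQ w η ^ (ε * p) / (p * ε))
    ∧ Tendsto (normalizedDeficit w p η) (𝓝[>] 0) (𝓝 (((1 - 1 / p) ^ p) ^ ((p - 1) / p)))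
    ∧ ∀ c : ℝ, IsHardyBoundaryConst w p η c → c ≤ ((1 - 1 / p) ^ p) ^ ((p - 1) / p) := by
  have hp0 : 0 < p := by linarith
  have hlim := tendsto_normalizedDeficit hw hη hp
  refine ⟨fun ε hε => ⟨integral_energy_uTest hw hη hp.le hε, ?_⟩, hlim, fun c hc => ?_⟩
  · rw [integral_potential_uTest hw hη hp0 hε, mul_div_assoc, sub_div, div_self hp0.ne']
  · refine ge_of_tendsto hlim ?_
    filter_upwards [self_mem_nhdsWithin] with ε hε using hc.le_normalizedDeficit hw hη hp.le hε

/-- Sharpness of the boundary constant `Λ_p^{1/p'}` for `w ∈ Q(ℝ₊)`: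
exact computation of both sides of the Hardy inequality on the test functions
`u_ε = f_η^{1/p'+ε}`, the resulting limit as `ε → 0⁺`, and the consequence that the
boundary constant cannot be replaced by any larger one. -/
theorem hardy_Q_boundary_constant_sharp (p η : ℝ) (hp : 1 < p) (hη : 0 < η)
    (w : ℝ → ℝ)
    (hw_pos : ∀ t, 0 < t → 0 < w t)
    (hw_smooth : ContDiffOn ℝ 1 w (Set.Ioi 0))
    (hw_lim : ∃ a : ENNReal, Filter.Tendsto (fun t => ENNReal.ofReal (w t))
        (nhdsWithin (0:ℝ) (Set.Ioi 0)) (nhds a))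
    (hwQ : ∀ b, 0 < b → MeasureTheory.IntegrableOn (fun s => (w s)⁻¹) (Set.Ioo 0 b)) :
    (∀ ε : ℝ, 0 < ε →
      (∫ t in (0:ℝ)..η, |deriv (uTest w p ε) t| ^ p * Wp w p t)
        = ((p - 1) / p + ε) ^ p * fQ w η ^ (ε * p) / (p * ε)
      ∧ (1 - 1 / p) ^ p *
          (∫ t in (0:ℝ)..η, |uTest w p ε t| ^ p * Wp w p t / FQ w t ^ p)
        = ((p - 1) / p) ^ p * fQ w η ^ (ε * p) / (p * ε))
    ∧ Filter.Tendsto (fun ε : ℝ =>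
        ((∫ t in (0:ℝ)..η, |deriv (uTest w p ε) t| ^ p * Wp w p t)
          - (1 - 1 / p) ^ p *
              ∫ t in (0:ℝ)..η, |uTest w p ε t| ^ p * Wp w p t / FQ w t ^ p)
          * fQ w η ^ (p - 1) / uTest w p ε η ^ p)
        (nhdsWithin (0:ℝ) (Set.Ioi 0)) (nhds (((1 - 1 / p) ^ p) ^ ((p - 1) / p)))
    ∧ ∀ c : ℝ,
        (∀ u u' : ℝ → ℝ,
          (∀ t ∈ Set.Ioc (0:ℝ) η, HasDerivWithinAt u (u' t) (Set.Ioc (0:ℝ) η) t) →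
          ContinuousOn u' (Set.Ioc (0:ℝ) η) →
          (∃ a, 0 < a ∧ ∀ t ≤ a, u t = 0) →
          (∫ t in (0:ℝ)..η, |u' t| ^ p * Wp w p t)
          ≥ (1 - 1 / p) ^ p *
              (∫ t in (0:ℝ)..η, |u t| ^ p * Wp w p t / FQ w t ^ p)
            + c * fQ w η ^ (1 - p) * |u η| ^ p) →
        c ≤ ((1 - 1 / p) ^ p) ^ ((p - 1) / p) := by
  obtain ⟨hvalues, hlim, hsharp⟩ := hardy_Q_boundary_constant_sharp_general hp hη
    ⟨fun t ht => hw_pos t ht.1, hw_smooth.continuousOn.mono Ioc_subset_Ioi_self, hwQ η hη⟩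
  exact ⟨hvalues, hlim, fun c hc => hsharp c (isHardyBoundaryConst_of_forall_eq_zero_of_le hη hc)⟩
end
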